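/- Let n ≥ 2, let 0 < φ, s ≥ 1 with s·φ ≤ π/2, and let 0 < θ ≤ 2φ. Define θ' := arccos( cos²(sφ) + (sin²(sφ)/sin²φ)·(cos θ − cos²φ) ). Then A(n,θ,φ) ≤ A(n,θ',sφ). -/

import Mathlib

noncomputable section

/-- The "North pole" `(0, …, 0, 1)` of the unit sphere in `ℝ^n`. -/
def north (n : ℕ) : EuclideanSpace ℝ (Fin n) :=
  if h : 0 < n then EuclideanSpace.single ⟨n - 1, Nat.sub_lt h Nat.one_pos⟩ 1 else 0

/-- Angular distance between two points: `arccos ⟨x, y⟩`. -/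
def aDist {n : ℕ} (x y : EuclideanSpace ℝ (Fin n)) : ℝ := Real.arccos (inner ℝ x y : ℝ)

/-- A finite set of unit vectors with pairwise angular distance at least `θ`. -/
def IsCode {n : ℕ} (θ : ℝ) (C : Finset (EuclideanSpace ℝ (Fin n))) : Prop :=
  (∀ x ∈ C, ‖x‖ = 1) ∧ ∀ x ∈ C, ∀ y ∈ C, x ≠ y → θ ≤ aDist x y

/-- `A(n, θ)`: maximal size of a `θ`-code on the unit sphere `S^{n-1} ⊂ ℝ^n`. -/
def sphereMax (n : ℕ) (θ : ℝ) : ℕ :=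
  sSup {M | ∃ C : Finset (EuclideanSpace ℝ (Fin n)), IsCode θ C ∧ C.card = M}

/-- `A(n, θ, φ)`: maximal size of a `θ`-code in the cap of angular radius `φ` about the
North pole. -/
def capMax (n : ℕ) (θ φ : ℝ) : ℕ :=
  sSup {M | ∃ C : Finset (EuclideanSpace ℝ (Fin n)), IsCode θ C ∧
    (∀ x ∈ C, aDist x (north n) ≤ φ) ∧ C.card = M}

/-- `A(n, θ, [ψ, φ])`: maximal size of a `θ`-code in the strip `Z(n, [ψ, φ])`. -/
def stripMax (n : ℕ) (θ ψ φ : ℝ) : ℕ :=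
  sSup {M | ∃ C : Finset (EuclideanSpace ℝ (Fin n)), IsCode θ C ∧
    (∀ x ∈ C, ψ ≤ aDist x (north n) ∧ aDist x (north n) ≤ φ) ∧ C.card = M}

/-- `m(n, d)`: maximal number of points in the closed unit ball of `ℝ^n` with pairwise
Euclidean distances at least `d`. -/
def ballMax (n : ℕ) (d : ℝ) : ℕ :=
  sSup {M | ∃ C : Finset (EuclideanSpace ℝ (Fin n)), (∀ x ∈ C, ‖x‖ ≤ 1) ∧
    (∀ x ∈ C, ∀ y ∈ C, x ≠ y → d ≤ dist x y) ∧ C.card = M}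

/-- `ω(θ, α, β) = arccos((cos θ - cos α cos β) / (sin α sin β))`. -/
def omega2 (θ α β : ℝ) : ℝ :=
  Real.arccos ((Real.cos θ - Real.cos α * Real.cos β) / (Real.sin α * Real.sin β))

/-- `ω(θ, α) := ω(θ, α, α)`. -/
def omega1 (θ α : ℝ) : ℝ := omega2 θ α α

end


/-!
The angle `θ' = arccos (1 - t ^ 2 * (1 - cos θ))`, with `t = sin (s * φ) / sin φ`, is the one whose
chord is `t` times the chord of `θ`. Multiply the horizontal component of every point of the cap by
`t ≥ 1` and lift the result back to the upper hemisphere; points at angle `φ` from the pole go to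
points at angle `s * φ`. Every chord is stretched by a factor of at least `t`: its horizontal part
is scaled by exactly `t`, and its vertical part by at least `t`, because the height `c` becomes an
`h` with `h ^ 2 + (t ^ 2 - 1) = (t * c) ^ 2`, and Cauchy–Schwarz compares the products of two such
heights. Hence `θ`-codes in the small cap inject into `θ'`-codes in the large one. Compactness of
the sphere bounds the size of the latter, so that the supremum defining `capMax` is not the junk
value `0`.
-/

section Dilation

/-- The height on the unit circle of the point whose distance from the axis is `t` times that of
the point of height `c`; it is `0`, by the convention for `√`, if there is no such point. -/
noncomputable def dilatedHeight (t c : ℝ) : ℝ := √(1 - t ^ 2 * (1 - c ^ 2))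

theorem dilatedHeight_sq {t c : ℝ} (h : t ^ 2 * (1 - c ^ 2) ≤ 1) :
    dilatedHeight t c ^ 2 = 1 - t ^ 2 * (1 - c ^ 2) :=
  Real.sq_sqrt (sub_nonneg.2 h)

theorem dilatedHeight_le_dilatedHeight (t : ℝ) {c d : ℝ} (hc : 0 ≤ c) (hcd : c ≤ d) :
    dilatedHeight t c ≤ dilatedHeight t d := by
  unfold dilatedHeight
  gcongr

theorem dilatedHeight_cos (t φ : ℝ) :
    dilatedHeight t (Real.cos φ) = Real.cos (Real.arcsin (t * Real.sin φ)) := by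
  rw [dilatedHeight, Real.cos_arcsin, mul_pow, Real.sin_sq]

theorem dilatedHeight_mul_add_le {t c d : ℝ} (ht : 1 ≤ t) (hc : 0 ≤ c) (hd : 0 ≤ d)
    (htc : t ^ 2 * (1 - c ^ 2) ≤ 1) (htd : t ^ 2 * (1 - d ^ 2) ≤ 1) :
    dilatedHeight t c * dilatedHeight t d + (t ^ 2 - 1) ≤ t * c * (t * d) := by
  have hr : 0 ≤ t ^ 2 - 1 := sub_nonneg.2 (one_le_pow₀ ht)
  have hc_sq : (t * c) ^ 2 = dilatedHeight t c ^ 2 + (t ^ 2 - 1) := by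
    rw [dilatedHeight_sq htc]; ring
  have hd_sq : (t * d) ^ 2 = dilatedHeight t d ^ 2 + (t ^ 2 - 1) := by
    rw [dilatedHeight_sq htd]; ring
  -- Cauchy–Schwarz for the plane vectors `(dilatedHeight t c, r)` and `(dilatedHeight t d, r)`
  -- with `r = √(t² - 1)`, whose norms are `t * c` and `t * d`
  refine le_of_sq_le_sq ?_ (by positivity)
  rw [mul_pow (t * c), hc_sq, hd_sq]
  linarith [mul_nonneg hr (sq_nonneg (dilatedHeight t c - dilatedHeight t d))]

theorem sq_mul_sub_le_sq_dilatedHeight_sub {t c d : ℝ} (ht : 1 ≤ t) (hc : 0 ≤ c) (hd : 0 ≤ d)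
    (htc : t ^ 2 * (1 - c ^ 2) ≤ 1) (htd : t ^ 2 * (1 - d ^ 2) ≤ 1) :
    (t * (c - d)) ^ 2 ≤ (dilatedHeight t c - dilatedHeight t d) ^ 2 := by
  linarith [dilatedHeight_sq htc, dilatedHeight_sq htd,
    dilatedHeight_mul_add_le ht hc hd htc htd]

variable {E : Type*} [NormedAddCommGroup E] [InnerProductSpace ℝ E] {e x y : E} {t : ℝ}

theorem dist_sq_of_norm_eq_one (hx : ‖x‖ = 1) (hy : ‖y‖ = 1) :
    dist x y ^ 2 = 2 * (1 - inner ℝ x y) := by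
  rw [dist_eq_norm, norm_sub_sq_real, hx, hy]
  ring

theorem inner_sub_inner_smul_self_left (he : ‖e‖ = 1) (v : E) :
    inner ℝ (v - inner ℝ v e • e) e = 0 := by
  simp [inner_sub_left, real_inner_smul_left, he]

theorem norm_sq_smul_sub_inner_smul_add_smul (he : ‖e‖ = 1) (t a : ℝ) (v : E) :
    ‖t • (v - inner ℝ v e • e) + a • e‖ ^ 2 = t ^ 2 * (‖v‖ ^ 2 - inner ℝ v e ^ 2) + a ^ 2 := by
  have horizontal : ‖v - inner ℝ v e • e‖ ^ 2 = ‖v‖ ^ 2 - inner ℝ v e ^ 2 := by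
    rw [norm_sub_sq_real, real_inner_smul_right, norm_smul, he, Real.norm_eq_abs, mul_one, sq_abs]
    ring
  rw [norm_add_sq_real, real_inner_smul_left, real_inner_smul_right,
    inner_sub_inner_smul_self_left he, norm_smul, norm_smul, mul_pow, mul_pow, horizontal, he]
  simp

/-- The map from a cap of the unit sphere around the pole `e` to a larger one that multiplies the
component orthogonal to `e` by `t` and adjusts the height so as to stay on the sphere, in the
hemisphere around `e`. -/
noncomputable def capDilation (e : E) (t : ℝ) (x : E) : E :=
  t • (x - inner ℝ x e • e) + dilatedHeight t (inner ℝ x e) • e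

/-- The points of the hemisphere around the pole `e`, not required to have norm one, whose height
over the equator is large enough for their `capDilation` by the factor `t` to exist. -/
def dilationDomain (e : E) (t : ℝ) : Set E :=
  {x | 0 ≤ inner ℝ x e ∧ t ^ 2 * (1 - inner ℝ x e ^ 2) ≤ 1}

theorem mem_dilationDomain_of_le_inner {c : ℝ} (hc : 0 ≤ c) (htc : t ^ 2 * (1 - c ^ 2) ≤ 1)
    (hx : c ≤ inner ℝ x e) : x ∈ dilationDomain e t :=
  ⟨hc.trans hx, le_trans (by gcongr) htc⟩

theorem norm_capDilation (he : ‖e‖ = 1) (hx : ‖x‖ = 1) (hxD : x ∈ dilationDomain e t) :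
    ‖capDilation e t x‖ = 1 := by
  rw [← pow_eq_one_iff_of_nonneg (norm_nonneg _) two_ne_zero, capDilation,
    norm_sq_smul_sub_inner_smul_add_smul he, dilatedHeight_sq hxD.2, hx]
  ring

theorem inner_capDilation_pole (he : ‖e‖ = 1) (t : ℝ) (x : E) :
    inner ℝ (capDilation e t x) e = dilatedHeight t (inner ℝ x e) := by
  rw [capDilation, inner_add_left, real_inner_smul_left, inner_sub_inner_smul_self_left he,
    real_inner_smul_left, real_inner_self_eq_norm_sq, he]
  ring

theorem mul_dist_le_dist_capDilation (he : ‖e‖ = 1) (ht : 1 ≤ t)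
    (hx : x ∈ dilationDomain e t) (hy : y ∈ dilationDomain e t) :
    t * dist x y ≤ dist (capDilation e t x) (capDilation e t y) := by
  have hdiff : capDilation e t x - capDilation e t y =
      t • ((x - y) - inner ℝ (x - y) e • e) +
        (dilatedHeight t (inner ℝ x e) - dilatedHeight t (inner ℝ y e)) • e := by
    simp only [capDilation, inner_sub_left]
    module
  refine le_of_sq_le_sq ?_ dist_nonneg
  rw [dist_eq_norm, dist_eq_norm, hdiff, norm_sq_smul_sub_inner_smul_add_smul he, inner_sub_left]
  linarith [sq_mul_sub_le_sq_dilatedHeight_sub ht hx.1 hy.1 hx.2 hy.2]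

theorem injOn_capDilation (he : ‖e‖ = 1) (ht : 1 ≤ t) :
    Set.InjOn (capDilation e t) (dilationDomain e t) := by
  intro x hx y hy hxy
  have hdist := mul_dist_le_dist_capDilation he ht hx hy
  rw [hxy, dist_self] at hdist
  exact dist_le_zero.1 (nonpos_of_mul_nonpos_right hdist (by linarith))

theorem inner_capDilation_le (he : ‖e‖ = 1) (ht : 1 ≤ t) (hx : ‖x‖ = 1) (hy : ‖y‖ = 1)
    (hxD : x ∈ dilationDomain e t) (hyD : y ∈ dilationDomain e t) :
    inner ℝ (capDilation e t x) (capDilation e t y) ≤ 1 - t ^ 2 * (1 - inner ℝ x y) := by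
  have hdist := pow_le_pow_left₀ (by positivity) (mul_dist_le_dist_capDilation he ht hxD hyD) 2
  rw [mul_pow, dist_sq_of_norm_eq_one hx hy, dist_sq_of_norm_eq_one
    (norm_capDilation he hx hxD) (norm_capDilation he hy hyD)] at hdist
  linarith

end Dilation

theorem packingNumber_ne_top_of_totallyBounded {X : Type*} [PseudoEMetricSpace X] {A : Set X}
    (hA : TotallyBounded A) {ε : NNReal} (hε : ε ≠ 0) : Metric.packingNumber ε A ≠ ⊤ := by
  obtain ⟨N, -, hN_finite, hN⟩ :=
    Metric.exists_finite_isCover_of_totallyBounded (half_pos hε.bot_lt).ne' hA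
  have hcover : Metric.externalCoveringNumber (ε / 2) A < ⊤ :=
    hN.externalCoveringNumber_le_encard.trans_lt hN_finite.encard_lt_top
  have hpacking := Metric.packingNumber_two_mul_le_externalCoveringNumber (ε / 2) A
  rw [mul_div_cancel₀ ε two_ne_zero] at hpacking
  exact (hpacking.trans_lt hcover).ne

section Codes

variable {n : ℕ} {θ φ t : ℝ} {x y : EuclideanSpace ℝ (Fin n)}
  {C : Finset (EuclideanSpace ℝ (Fin n))}

theorem norm_north (hn : 0 < n) : ‖north n‖ = 1 := by
  simp [north, hn]

theorem cos_lt_one_of_pos_of_le_pi (hθ : 0 < θ) (hθπ : θ ≤ Real.pi) : Real.cos θ < 1 :=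
  Real.cos_zero ▸ Real.cos_lt_cos_of_nonneg_of_le_pi le_rfl hθπ hθ

theorem cos_aDist (hx : ‖x‖ = 1) (hy : ‖y‖ = 1) : Real.cos (aDist x y) = inner ℝ x y := by
  have hxy := abs_le.1 (abs_real_inner_le_norm x y)
  rw [hx, hy, mul_one] at hxy
  exact Real.cos_arccos hxy.1 hxy.2

theorem cos_le_inner_of_aDist_le (hx : ‖x‖ = 1) (hy : ‖y‖ = 1) (hφ : φ ≤ Real.pi)
    (h : aDist x y ≤ φ) : Real.cos φ ≤ inner ℝ x y :=
  cos_aDist hx hy ▸ Real.cos_le_cos_of_nonneg_of_le_pi (Real.arccos_nonneg _) hφ h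

namespace IsCode

theorem inner_le_cos (hC : IsCode θ C) (hθ : 0 ≤ θ) (hx : x ∈ C) (hy : y ∈ C) (hxy : x ≠ y) :
    inner ℝ x y ≤ Real.cos θ :=
  cos_aDist (hC.1 x hx) (hC.1 y hy) ▸
    Real.cos_le_cos_of_nonneg_of_le_pi hθ (Real.arccos_le_pi _) (hC.2 x hx y hy hxy)

theorem coe_subset_sphere (hC : IsCode θ C) : (C : Set (EuclideanSpace ℝ (Fin n))) ⊆
    Metric.sphere 0 1 :=
  fun x hx => mem_sphere_zero_iff_norm.2 (hC.1 x hx)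

theorem isSeparated (hC : IsCode θ C) (hθ : 0 < θ) (hθπ : θ ≤ Real.pi) :
    Metric.IsSeparated (ENNReal.ofReal √(1 - Real.cos θ))
      (C : Set (EuclideanSpace ℝ (Fin n))) := by
  intro x hx y hy hxy
  have hcos : Real.cos θ < 1 := cos_lt_one_of_pos_of_le_pi hθ hθπ
  have hinner : inner ℝ x y ≤ Real.cos θ := hC.inner_le_cos hθ.le hx hy hxy
  rw [edist_dist, ENNReal.ofReal_lt_ofReal_iff (dist_pos.2 hxy), Real.sqrt_lt' (dist_pos.2 hxy),
    dist_sq_of_norm_eq_one (hC.1 x hx) (hC.1 y hy)]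
  linarith

theorem card_le_packingNumber_sphere (hC : IsCode θ C) (hθ : 0 < θ) (hθπ : θ ≤ Real.pi) :
    (C.card : ℕ∞) ≤ Metric.packingNumber (√(1 - Real.cos θ)).toNNReal
      (Metric.sphere (0 : EuclideanSpace ℝ (Fin n)) 1) := by
  rw [← Set.encard_coe_eq_coe_finsetCard]
  exact Metric.IsSeparated.encard_le_packingNumber hC.coe_subset_sphere (hC.isSeparated hθ hθπ)

theorem exists_card_le (n : ℕ) (hθ : 0 < θ) (hθπ : θ ≤ Real.pi) :
    ∃ N, ∀ C : Finset (EuclideanSpace ℝ (Fin n)), IsCode θ C → C.card ≤ N := by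
  have hε : (√(1 - Real.cos θ)).toNNReal ≠ 0 :=
    (Real.toNNReal_pos.2 (Real.sqrt_pos.2
      (sub_pos.2 (cos_lt_one_of_pos_of_le_pi hθ hθπ)))).ne'
  obtain ⟨N, hN⟩ := ENat.ne_top_iff_exists.1 (packingNumber_ne_top_of_totallyBounded
    (isCompact_sphere (0 : EuclideanSpace ℝ (Fin n)) 1).totallyBounded hε)
  exact ⟨N, fun C hC => ENat.natCast_le_natCast.1 (hN ▸ hC.card_le_packingNumber_sphere hθ hθπ)⟩

theorem card_le_capMax (hC : IsCode θ C) (hθ : 0 < θ) (hθπ : θ ≤ Real.pi)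
    (hcap : ∀ x ∈ C, aDist x (north n) ≤ φ) : C.card ≤ capMax n θ φ := by
  obtain ⟨N, hN⟩ := exists_card_le n hθ hθπ
  refine le_csSup ⟨N, ?_⟩ ⟨C, hC, hcap, rfl⟩
  rintro _ ⟨D, hD, -, rfl⟩
  exact hN D hD

theorem image_capDilation [DecidableEq (EuclideanSpace ℝ (Fin n))] (hC : IsCode θ C) (hn : 0 < n)
    (hθ : 0 ≤ θ) (ht : 1 ≤ t) (hdom : ∀ x ∈ C, x ∈ dilationDomain (north n) t) :
    IsCode (Real.arccos (1 - t ^ 2 * (1 - Real.cos θ))) (C.image (capDilation (north n) t)) := by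
  have he := norm_north hn
  constructor
  · rw [Finset.forall_mem_image]
    exact fun x hx => norm_capDilation he (hC.1 x hx) (hdom x hx)
  · simp only [Finset.forall_mem_image]
    intro x hx y hy hxy
    have hinner : inner ℝ x y ≤ Real.cos θ :=
      hC.inner_le_cos hθ hx hy (ne_of_apply_ne _ hxy)
    refine Real.arccos_le_arccos ?_
    calc inner ℝ (capDilation (north n) t x) (capDilation (north n) t y)
        ≤ 1 - t ^ 2 * (1 - inner ℝ x y) :=
          inner_capDilation_le he ht (hC.1 x hx) (hC.1 y hy) (hdom x hx) (hdom y hy)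
      _ ≤ 1 - t ^ 2 * (1 - Real.cos θ) := by gcongr

end IsCode

theorem aDist_capDilation_north_le (hn : 0 < n) (hx : ‖x‖ = 1) (ht : 0 ≤ t) (hφ : 0 ≤ φ)
    (hφ2 : φ ≤ Real.pi / 2) (hcap : aDist x (north n) ≤ φ) :
    aDist (capDilation (north n) t x) (north n) ≤ Real.arcsin (t * Real.sin φ) := by
  have hcos : 0 ≤ Real.cos φ := Real.cos_nonneg_of_mem_Icc ⟨by linarith, hφ2⟩
  have hsin : 0 ≤ Real.sin φ := Real.sin_nonneg_of_nonneg_of_le_pi hφ (by linarith)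
  have hinner : Real.cos φ ≤ inner ℝ x (north n) :=
    cos_le_inner_of_aDist_le hx (norm_north hn) (by linarith) hcap
  calc aDist (capDilation (north n) t x) (north n)
      = Real.arccos (dilatedHeight t (inner ℝ x (north n))) := by
        rw [aDist, inner_capDilation_pole (norm_north hn)]
    _ ≤ Real.arccos (dilatedHeight t (Real.cos φ)) :=
        Real.arccos_le_arccos (dilatedHeight_le_dilatedHeight t hcos hinner)
    _ = Real.arcsin (t * Real.sin φ) := by
        rw [dilatedHeight_cos, Real.arccos_cos (Real.arcsin_nonneg.2 (mul_nonneg ht hsin))]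
        linarith [Real.arcsin_le_pi_div_two (t * Real.sin φ)]

theorem capMax_le_capMax_arcsin (hn : 0 < n) (ht : 1 ≤ t) (hφ : 0 ≤ φ) (hφ2 : φ ≤ Real.pi / 2)
    (htφ : t * Real.sin φ ≤ 1) (hθ : 0 < θ) (hθπ : θ ≤ Real.pi) :
    capMax n θ φ ≤
      capMax n (Real.arccos (1 - t ^ 2 * (1 - Real.cos θ))) (Real.arcsin (t * Real.sin φ)) := by
  classical
  have hcos : 0 ≤ Real.cos φ := Real.cos_nonneg_of_mem_Icc ⟨by linarith, hφ2⟩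
  have hsin : 0 ≤ Real.sin φ := Real.sin_nonneg_of_nonneg_of_le_pi hφ (by linarith)
  have htcos : t ^ 2 * (1 - Real.cos φ ^ 2) ≤ 1 := by
    rw [← Real.sin_sq, ← mul_pow]
    exact pow_le_one₀ (by positivity) htφ
  have hθ' : 0 < Real.arccos (1 - t ^ 2 * (1 - Real.cos θ)) :=
    Real.arccos_pos.2 (sub_lt_self 1
      (mul_pos (by positivity) (sub_pos.2 (cos_lt_one_of_pos_of_le_pi hθ hθπ))))
  refine csSup_le' ?_
  rintro _ ⟨C, hC, hcap, rfl⟩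
  have hdom : ∀ x ∈ C, x ∈ dilationDomain (north n) t := fun x hx =>
    mem_dilationDomain_of_le_inner hcos htcos
      (cos_le_inner_of_aDist_le (hC.1 x hx) (norm_north hn) (by linarith) (hcap x hx))
  rw [← Finset.card_image_of_injOn ((injOn_capDilation (norm_north hn) ht).mono hdom)]
  refine (hC.image_capDilation hn hθ.le ht hdom).card_le_capMax hθ' (Real.arccos_le_pi _) ?_
  rw [Finset.forall_mem_image]
  exact fun x hx =>
    aDist_capDilation_north_le hn (hC.1 x hx) (by linarith) hφ hφ2 (hcap x hx)

end Codes

theorem stmt10_general (n : ℕ) (hn : 0 < n) (θ φ ψ : ℝ) (hφ : 0 < φ) (hφψ : φ ≤ ψ)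
    (hψ : ψ ≤ Real.pi / 2) (hθ : 0 < θ) (hθπ : θ ≤ Real.pi) :
    capMax n θ φ ≤
      capMax n (Real.arccos (Real.cos ψ ^ 2 +
        (Real.sin ψ ^ 2 / Real.sin φ ^ 2) * (Real.cos θ - Real.cos φ ^ 2))) ψ := by
  have hsin : 0 < Real.sin φ := Real.sin_pos_of_pos_of_lt_pi hφ (by linarith)
  have hsin_le : Real.sin φ ≤ Real.sin ψ :=
    Real.sin_le_sin_of_le_of_le_pi_div_two (by linarith) hψ hφψ
  have hmul : Real.sin ψ / Real.sin φ * Real.sin φ = Real.sin ψ := div_mul_cancel₀ _ hsin.ne'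
  have hangle : Real.cos ψ ^ 2 + (Real.sin ψ ^ 2 / Real.sin φ ^ 2) *
      (Real.cos θ - Real.cos φ ^ 2) =
        1 - (Real.sin ψ / Real.sin φ) ^ 2 * (1 - Real.cos θ) := by
    rw [Real.cos_sq' ψ, Real.cos_sq' φ]
    field_simp
    ring
  have hdilation := capMax_le_capMax_arcsin hn ((one_le_div hsin).2 hsin_le) hφ.le
    (hφψ.trans hψ) (hmul.trans_le (Real.sin_le_one ψ)) hθ hθπ
  rwa [hmul, Real.arcsin_sin (by linarith) hψ, ← hangle] at hdilation

theorem stmt10 (n : ℕ) (hn : 2 ≤ n) (θ φ s : ℝ) (hφ : 0 < φ) (hs : 1 ≤ s)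
    (hsφ : s * φ ≤ Real.pi / 2) (hθ : 0 < θ) (hθ2 : θ ≤ 2 * φ) :
    capMax n θ φ ≤
      capMax n (Real.arccos (Real.cos (s * φ) ^ 2 +
        (Real.sin (s * φ) ^ 2 / Real.sin φ ^ 2) * (Real.cos θ - Real.cos φ ^ 2))) (s * φ) := by
  have hφψ : φ ≤ s * φ := le_mul_of_one_le_left hφ.le hs
  exact stmt10_general n (by omega) θ φ (s * φ) hφ hφψ hsφ hθ (by linarith)
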